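/- For all real numbers u, q, x with q > 1, 0 < u < 1, |x| ≤ 1, and every integer k ≥ 1, the sum over all partitions λ with exactly k parts (λ'_1 = k) of x^{|λ|}·M_{(u,q)}(λ) equals (u·x)^k/|GL(k,q)| · [∏_{r=1}^∞ (1 − u/q^r)] / [∏_{r=1}^k (1 − u·x/q^r)]. -/

import Mathlib

/-!
Put `z = u x`, so `|z| < 1`, and let `F_k(z)` be the sum of `z^|λ| / (q^(…) ∏ |GL(m_i, q)|)` over
the partitions `λ` with `k` parts. Removing the first column of `λ` leaves a partition `μ` with
`j ≤ k` parts, and the weight of `λ` is that of `μ` times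
`z^k / (q^(j² + 2 j (k - j)) |GL(k - j, q)|)` (`weight_addCol`).

For `k ≥ 1`, removing *all* columns of height `k` identifies the partitions with `k` parts with
`ℕ × Σ_{j < k} {partitions with j parts}` (a disjoint union; `addColsEquiv`).
Each full column beyond the first contributes the factor `z^k / q^(k²)`, of absolute value less than `1`. So `F_k` is a geometric
series times a finite combination of the `F_j` with `j < k`; by induction on `k` this gives
convergence and the value at once, with no separate domination argument (`hasSum_weight`).

It remains to see that the claimed closed form satisfies the same recursion (`closedForm_rec`).
With `t = 1/q` and `|GL(m, q)| = q^(m²) (t; t)_m`, this is the terminating `q`-Chu–Vandermonde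
identity `∑_{a+b=k} z^a t^(a²) (z t^(a+1); t)_b / ((t; t)_a (t; t)_b) = 1 / (t; t)_k`
(`chu_vandermonde`).
-/

open scoped BigOperators

/-- The "order of `GL(m,q)`" for a real parameter `q`:
`|GL(m,q)| = q^(m(m-1)/2) * ∏_{j=1}^m (q^j - 1)`. -/
noncomputable def glOrder (q : ℝ) (m : ℕ) : ℝ :=
  q ^ (m * (m - 1) / 2) * ∏ j ∈ Finset.range m, (q ^ (j + 1) - 1)

/-- The measure `M_{(u,q)}` on the set of all partitions of all nonnegative integers. -/
noncomputable def measureM (u q : ℝ) (lam : Σ n : ℕ, Nat.Partition n) : ℝ :=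
  (∏' r : ℕ, (1 - u / q ^ (r + 1))) * u ^ lam.1 /
    (q ^ (2 * ∑ i ∈ Finset.range (lam.1 + 1), ∑ h ∈ Finset.range i,
            h * lam.2.parts.count h * lam.2.parts.count i
        + ∑ i ∈ Finset.range (lam.1 + 1), (i - 1) * lam.2.parts.count i ^ 2) *
      ∏ i ∈ Finset.range (lam.1 + 1), glOrder q (lam.2.parts.count i))

/-! ### The `q`-series identity -/

open Finset in
/-- The finite `t`-Pochhammer symbol `(t; t)_m = ∏_{j=1}^m (1 - t^j)`. -/
noncomputable def poch (t : ℝ) (m : ℕ) : ℝ := ∏ i ∈ range m, (1 - t ^ (i + 1))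

lemma poch_ne_zero {t : ℝ} (h0 : 0 ≤ t) (h1 : t < 1) (m : ℕ) : poch t m ≠ 0 := by
  refine Finset.prod_ne_zero_iff.2 fun i _ => ?_
  have := pow_lt_one₀ h0 h1 (Nat.succ_ne_zero i)
  simp only [Nat.succ_eq_add_one] at this
  linarith

lemma poch_succ (t : ℝ) (m : ℕ) : poch t (m + 1) = poch t m * (1 - t ^ (m + 1)) :=
  Finset.prod_range_succ _ _

lemma glOrder_eq {q : ℝ} (hq : 1 < q) (m : ℕ) : glOrder q m = q ^ (m ^ 2) * poch q⁻¹ m := by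
  have hq0 : q ≠ 0 := by positivity
  induction m with
  | zero => simp [glOrder, poch]
  | succ m ih =>
    have h : glOrder q (m + 1) = glOrder q m * q ^ m * (q ^ (m + 1) - 1) := by
      simp only [glOrder]
      rw [Finset.prod_range_succ, Nat.triangle_succ, pow_add]
      ring
    have h2 : q ^ (m + 1) - 1 = q ^ (m + 1) * (1 - q⁻¹ ^ (m + 1)) := by
      rw [mul_sub, ← mul_pow, mul_inv_cancel₀ hq0]; simp
    rw [h, ih, poch_succ, h2]
    ring

lemma glOrder_pos {q : ℝ} (hq : 1 < q) (m : ℕ) : 0 < glOrder q m := by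
  refine mul_pos (by positivity) (Finset.prod_pos fun i _ => ?_)
  have := one_lt_pow₀ hq (Nat.succ_ne_zero i)
  simp only [Nat.succ_eq_add_one] at this
  linarith

open Finset in
/-- A terminating `q`-Chu–Vandermonde summation with base `t`. Splitting
`1 - t^(k+1) = (1 - t^b) + t^b (1 - t^a)` for `a + b = k + 1` expresses the sum of order `k + 1`
at `z` through those of order `k` at `z` and at `z t`. -/
lemma chu_vandermonde {t : ℝ} (h0 : 0 ≤ t) (h1 : t < 1) (k : ℕ) (z : ℝ) :
    ∑ p ∈ antidiagonal k, z ^ p.1 * t ^ (p.1 ^ 2) / (poch t p.1 * poch t p.2) *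
      ∏ i ∈ range p.2, (1 - z * t ^ (p.1 + i + 1)) = 1 / poch t k := by
  induction k generalizing z with
  | zero => simp [poch]
  | succ k ih =>
    have hP := poch_ne_zero h0 h1
    have hne : ∀ m : ℕ, 1 - t ^ (m + 1) ≠ 0 := fun m => by
      have := hP (m + 1)
      rw [poch_succ] at this
      exact right_ne_zero_of_mul this
    have key : (1 - t ^ (k + 1)) * ∑ p ∈ antidiagonal (k + 1),
        z ^ p.1 * t ^ (p.1 ^ 2) / (poch t p.1 * poch t p.2) *
          ∏ i ∈ range p.2, (1 - z * t ^ (p.1 + i + 1))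
        = (1 - z * t ^ (k + 1)) * (1 / poch t k) + z * t ^ (k + 1) * (1 / poch t k) := by
      have split : (1 - t ^ (k + 1)) * ∑ p ∈ antidiagonal (k + 1),
          z ^ p.1 * t ^ (p.1 ^ 2) / (poch t p.1 * poch t p.2) *
            ∏ i ∈ range p.2, (1 - z * t ^ (p.1 + i + 1))
          = (∑ p ∈ antidiagonal (k + 1), (1 - t ^ p.2) *
              (z ^ p.1 * t ^ (p.1 ^ 2) / (poch t p.1 * poch t p.2) *
                ∏ i ∈ range p.2, (1 - z * t ^ (p.1 + i + 1))))
            + ∑ p ∈ antidiagonal (k + 1), t ^ p.2 * (1 - t ^ p.1) *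
              (z ^ p.1 * t ^ (p.1 ^ 2) / (poch t p.1 * poch t p.2) *
                ∏ i ∈ range p.2, (1 - z * t ^ (p.1 + i + 1))) := by
        rw [mul_sum, ← sum_add_distrib]
        refine sum_congr rfl fun p hp => ?_
        rw [← mem_antidiagonal.1 hp]
        ring
      rw [split, Nat.sum_antidiagonal_succ', Nat.sum_antidiagonal_succ]
      simp only [pow_zero, sub_self, mul_zero, zero_mul, zero_add]
      congr 1
      · rw [← ih z, mul_sum]
        refine sum_congr rfl fun p hp => ?_
        rw [prod_range_succ, poch_succ, ← mem_antidiagonal.1 hp]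
        have := hne p.2
        have := hP p.1
        have := hP p.2
        field_simp
      · rw [← ih (z * t), mul_sum]
        refine sum_congr rfl fun p hp => ?_
        have hprod : ∏ i ∈ range p.2, (1 - z * t ^ (p.1 + 1 + i + 1))
            = ∏ i ∈ range p.2, (1 - z * t * t ^ (p.1 + i + 1)) :=
          prod_congr rfl fun i _ => by ring
        rw [hprod, poch_succ, ← mem_antidiagonal.1 hp]
        have := hne p.1
        have := hP p.1
        have := hP p.2
        field_simp
        ring
    have h2 := hne k
    rw [poch_succ]
    have := hP k
    apply mul_left_cancel₀ h2
    rw [key]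
    field_simp
    ring

/-- The value `z^k / (|GL(k,q)| ∏_{r=1}^k (1 - z/q^r))` of the generating function of the
partitions with `k` parts. -/
noncomputable def closedForm (z q : ℝ) (k : ℕ) : ℝ :=
  z ^ k / (glOrder q k * ∏ r ∈ Finset.range k, (1 - z / q ^ (r + 1)))

lemma one_sub_div_pos {z q : ℝ} (hz : |z| < 1) (hq : 1 < q) (r : ℕ) : 0 < 1 - z / q ^ r := by
  have h : 1 ≤ q ^ r := one_le_pow₀ hq.le
  have : z / q ^ r < 1 := by
    rw [div_lt_one (by positivity)]
    linarith [le_abs_self z]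
  linarith

open Finset in
/-- The recursion coming from the removal of the first column, with `p.1` the number of parts that
remain and `p.2` the number of parts equal to `1`. -/
lemma closedForm_rec {z q : ℝ} (hz : |z| < 1) (hq : 1 < q) (k : ℕ) :
    ∑ p ∈ antidiagonal k, z ^ k / (q ^ (p.1 ^ 2 + 2 * p.1 * p.2) * glOrder q p.2) *
      closedForm z q p.1 = closedForm z q k := by
  have hq0 : 0 < q := by linarith
  have h0 : 0 ≤ q⁻¹ := by positivity
  have h1 : q⁻¹ < 1 := inv_lt_one_of_one_lt₀ hq
  have hP := poch_ne_zero h0 h1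
  have hD : ∀ m, ∏ r ∈ range m, (1 - z / q ^ (r + 1)) ≠ 0 := fun m =>
    prod_ne_zero_iff.2 fun r _ => (one_sub_div_pos hz hq _).ne'
  have hC : closedForm z q k = z ^ k / (q ^ (k ^ 2) * ∏ r ∈ range k, (1 - z / q ^ (r + 1))) *
      (1 / poch q⁻¹ k) := by
    rw [closedForm, glOrder_eq hq]
    have := hP k
    have := hD k
    field_simp
  rw [hC, ← chu_vandermonde h0 h1 k z, mul_sum]
  refine sum_congr rfl fun p hp => ?_
  have hk := mem_antidiagonal.1 hp
  have hprod : ∏ r ∈ range k, (1 - z / q ^ (r + 1)) =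
      (∏ r ∈ range p.1, (1 - z / q ^ (r + 1))) *
        ∏ i ∈ range p.2, (1 - z * q⁻¹ ^ (p.1 + i + 1)) := by
    rw [← hk, prod_range_add]
    simp [div_eq_mul_inv]
  have hD1 := hD p.1
  have hDk := hD k
  rw [hprod] at hDk ⊢
  have hD2 := right_ne_zero_of_mul hDk
  rw [closedForm, glOrder_eq hq, glOrder_eq hq, ← hk]
  set A := ∏ r ∈ range p.1, (1 - z / q ^ (r + 1))
  set B := ∏ i ∈ range p.2, (1 - z * q⁻¹ ^ (p.1 + i + 1))
  have := hP p.1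
  have := hP p.2
  rw [inv_pow]
  field_simp
  ring

/-! ### Weights and prepending a column -/

open Finset in
/-- The exponent of `q` in the weight of a partition with multiplicities `f`, cut off at `N`. The
truncated `i - 1` at `i = 0` is harmless, since `f 0 = 0` for a partition. -/
def expo (f : ℕ → ℕ) (N : ℕ) : ℕ :=
  2 * ∑ i ∈ range N, ∑ h ∈ range i, h * f h * f i + ∑ i ∈ range N, (i - 1) * f i ^ 2

open Finset in
/-- Effect on the exponent of prepending a column: `f` are the old multiplicities, `g` the new
ones, and `a` is the number of new parts equal to `1`. -/
lemma expo_shift (f g : ℕ → ℕ) (a : ℕ) (f0 : f 0 = 0) (g1 : g 1 = a)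
    (hg : ∀ i, g (i + 2) = f (i + 1)) (N : ℕ) :
    expo g (N + 2) =
      expo f (N + 1) + ((∑ i ∈ range (N + 1), f i) ^ 2 + 2 * (∑ i ∈ range (N + 1), f i) * a) := by
  have aux : ∀ N, ∑ h ∈ range (N + 2), h * g h =
      a + ∑ h ∈ range (N + 1), h * f h + ∑ h ∈ range (N + 1), f h := by
    intro N
    induction N with
    | zero => simp [sum_range_succ, f0, g1]
    | succ N ih =>
      rw [sum_range_succ, ih, sum_range_succ _ (N + 1), sum_range_succ _ (N + 1), hg]
      ring
  induction N with
  | zero => simp [expo, sum_range_succ, f0]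
  | succ N ih =>
    have e1 : ∀ (f : ℕ → ℕ) N, expo f (N + 1) =
        expo f N + (2 * ((∑ h ∈ range N, h * f h) * f N) + (N - 1) * f N ^ 2) := by
      intro f N
      simp only [expo, sum_range_succ _ N, sum_mul]
      ring
    rw [e1 g (N + 2), ih, e1 f (N + 1), aux, hg, sum_range_succ _ (N + 1)]
    simp only [Nat.add_sub_cancel, show N + 2 - 1 = N + 1 by omega]
    ring

/-- The weight of the partition with multiset of parts `s`, without the normalising infinite
product, with `z` in place of `u`. -/
noncomputable def weight (z q : ℝ) (s : Multiset ℕ) : ℝ :=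
  z ^ s.sum / (q ^ expo (fun i => s.count i) (s.sum + 1) *
    ∏ i ∈ Finset.range (s.sum + 1), glOrder q (s.count i))

lemma count_eq_zero_of_sum_lt {s : Multiset ℕ} {i : ℕ} (h : s.sum < i) : s.count i = 0 :=
  Multiset.count_eq_zero.2 fun hi => absurd (Multiset.le_sum_of_mem hi) (by omega)

open Finset in
/-- The cut-off in the weight may be any bound exceeding the size of the partition. -/
lemma weight_eq (z q : ℝ) (s : Multiset ℕ) {N : ℕ} (hN : s.sum + 1 ≤ N) :
    weight z q s = z ^ s.sum / (q ^ expo (fun i => s.count i) N *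
      ∏ i ∈ range N, glOrder q (s.count i)) := by
  induction N, hN using Nat.le_induction with
  | base => rfl
  | succ N hN ih =>
    have h : s.count N = 0 := count_eq_zero_of_sum_lt (by omega)
    rw [ih, prod_range_succ, h]
    simp [expo, sum_range_succ, h, glOrder]

/-- Prepending a column to a Young diagram: all parts grow by one, and `a` parts equal to `1` are
added. -/
def addCol (a : ℕ) (s : Multiset ℕ) : Multiset ℕ := s.map Nat.succ + Multiset.replicate a 1

lemma card_addCol (a : ℕ) (s : Multiset ℕ) : (addCol a s).card = s.card + a := by
  simp [addCol]

lemma sum_addCol (a : ℕ) (s : Multiset ℕ) : (addCol a s).sum = s.sum + (s.card + a) := by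
  have : (s.map Nat.succ).sum = s.sum + s.card := by
    induction s using Multiset.induction with
    | empty => simp
    | cons x s ih => simp [ih]; ring
  simp [addCol, this]; ring

lemma zero_notMem_addCol (a : ℕ) (s : Multiset ℕ) : 0 ∉ addCol a s := by
  simp [addCol, Multiset.mem_replicate]

lemma count_addCol_succ (a : ℕ) (s : Multiset ℕ) (i : ℕ) :
    (addCol a s).count (i + 1) = s.count i + if i = 0 then a else 0 := by
  rw [addCol, Multiset.count_add, ← Nat.succ_eq_add_one,
    Multiset.count_map_eq_count' _ _ Nat.succ_injective, Multiset.count_replicate]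
  simp

lemma addCol_inj {a b : ℕ} {s t : Multiset ℕ} (hs : 0 ∉ s) (ht : 0 ∉ t)
    (h : addCol a s = addCol b t) : a = b ∧ s = t := by
  have hab : a = b := by
    have := congrArg (Multiset.count (0 + 1)) h
    simpa [count_addCol_succ, Multiset.count_eq_zero.2 hs, Multiset.count_eq_zero.2 ht] using this
  subst hab
  exact ⟨rfl, Multiset.map_injective Nat.succ_injective (add_right_cancel h)⟩

lemma exists_addCol (s : Multiset ℕ) (hs : 0 ∉ s) : ∃ a t, 0 ∉ t ∧ s = addCol a t := by
  induction s using Multiset.induction with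
  | empty => exact ⟨0, 0, by simp, rfl⟩
  | cons x s ih =>
    obtain ⟨a, t, ht, rfl⟩ := ih fun h => hs (Multiset.mem_cons_of_mem h)
    match x, hs with
    | 0, hs => simp at hs
    | 1, _ => exact ⟨a + 1, t, ht, by simp [addCol]⟩
    | y + 2, _ => exact ⟨a, (y + 1) ::ₘ t, by simp [ht], by simp [addCol]⟩

open Finset in
lemma sum_count_range (s : Multiset ℕ) {N : ℕ} (hN : s.sum < N) :
    ∑ i ∈ range N, s.count i = s.card :=
  Multiset.sum_count_eq_card fun _ hi => mem_range.2 ((Multiset.le_sum_of_mem hi).trans_lt hN)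

open Finset in
lemma weight_addCol (z q : ℝ) (a : ℕ) (s : Multiset ℕ) (hs : 0 ∉ s) :
    weight z q (addCol a s) =
      z ^ (s.card + a) / (q ^ (s.card ^ 2 + 2 * s.card * a) * glOrder q a) * weight z q s := by
  have hs0 := Multiset.count_eq_zero.2 hs
  have hg : ∀ i, (addCol a s).count (i + 2) = s.count (i + 1) := fun i => by
    simp [count_addCol_succ]
  have hg1 : (addCol a s).count 1 = a := by simpa [hs0] using count_addCol_succ a s 0
  have hg0 := Multiset.count_eq_zero.2 (zero_notMem_addCol a s)
  have hsum := sum_addCol a s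
  set M := (addCol a s).sum with hM
  have hp : ∏ i ∈ range (M + 2), glOrder q ((addCol a s).count i)
      = glOrder q a * ∏ i ∈ range (M + 1), glOrder q (s.count i) := by
    rw [prod_range_succ', prod_range_succ', prod_range_succ' _ M]
    simp only [hg, hg0, hg1, hs0, zero_add]
    simp [glOrder]
    ring
  rw [weight_eq z q (addCol a s) (N := M + 2) (by omega), weight_eq z q s (N := M + 1) (by omega),
    expo_shift (fun i => s.count i) _ a hs0 hg1 hg M, hp, sum_count_range s (by omega), ← hM, hsum,
    pow_add q, pow_add z]
  rw [div_mul_div_comm]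
  congr 1 <;> ring

/-! ### Removing all full columns -/

/-- The multisets of positive integers with `k` elements: partitions with exactly `k` parts. -/
abbrev Parts (k : ℕ) : Type := {s : Multiset ℕ // 0 ∉ s ∧ s.card = k}

/-- A partition with `k` parts built from one with `j < k` parts by prepending `c + 1` columns of
height `k`. -/
def addCols (k : ℕ) (p : ℕ × Σ j : Fin k, Parts j) : Multiset ℕ :=
  (addCol 0)^[p.1] (addCol (k - p.2.1) p.2.2.1)

lemma addCols_succ (k c : ℕ) (p : Σ j : Fin k, Parts j) :
    addCols k (c + 1, p) = addCol 0 (addCols k (c, p)) :=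
  Function.iterate_succ_apply' _ _ _

lemma addCols_mem (k : ℕ) (p : ℕ × Σ j : Fin k, Parts j) :
    0 ∉ addCols k p ∧ (addCols k p).card = k := by
  obtain ⟨c, j, s, hs, hc⟩ := p
  induction c with
  | zero => exact ⟨zero_notMem_addCol _ _, by
      have := j.2
      simp only [addCols, Function.iterate_zero, id, card_addCol, hc]
      omega⟩
  | succ c ih =>
    rw [addCols_succ]
    exact ⟨zero_notMem_addCol _ _, by rw [card_addCol, ih.2, add_zero]⟩

lemma addCols_injective (k : ℕ) : Function.Injective (addCols k) := by
  rintro ⟨c, p⟩ ⟨d, r⟩ h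
  have hne : ∀ (e : ℕ) (p r : Σ j : Fin k, Parts j), addCols k (0, p) ≠ addCols k (e + 1, r) := by
    intro e p r h
    rw [addCols_succ] at h
    have := (addCol_inj p.2.2.1 (addCols_mem k _).1 h).1
    have := p.1.2
    omega
  induction c generalizing d with
  | zero =>
    cases d with
    | succ d => exact absurd h (hne _ _ _)
    | zero =>
      obtain ⟨j, s, hs, hc⟩ := p
      obtain ⟨i, t, ht, hd⟩ := r
      obtain ⟨h1, h2⟩ := addCol_inj hs ht h
      subst h2
      obtain rfl : j = i := Fin.ext (hc.symm.trans hd)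
      rfl
  | succ c ih =>
    cases d with
    | zero => exact absurd h.symm (hne _ _ _)
    | succ d =>
      rw [addCols_succ, addCols_succ] at h
      have := ih d (addCol_inj (addCols_mem k _).1 (addCols_mem k _).1 h).2
      simp only [Prod.mk.injEq] at this ⊢
      exact ⟨by rw [this.1], this.2⟩

lemma addCols_surjective (k : ℕ) (hk : 1 ≤ k) (s : Multiset ℕ) (hs : 0 ∉ s) (hc : s.card = k) :
    ∃ p, addCols k p = s := by
  induction hn : s.sum using Nat.strong_induction_on generalizing s with
  | _ n ih =>
    obtain ⟨a, t, ht, rfl⟩ := exists_addCol s hs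
    have hcard := card_addCol a t
    have hsum := sum_addCol a t
    rcases Nat.eq_zero_or_pos a with rfl | ha
    · obtain ⟨p, hp⟩ := ih t.sum (by omega) t ht (by omega) rfl
      exact ⟨(p.1 + 1, p.2), by rw [addCols_succ, hp]⟩
    · refine ⟨(0, ⟨⟨t.card, by omega⟩, t, ht, rfl⟩), ?_⟩
      simp only [addCols, Function.iterate_zero, id]
      congr 1
      omega

/-- A partition with `k ≥ 1` parts amounts to a positive number of columns of height `k` followed
by a partition with fewer than `k` parts. -/
noncomputable def addColsEquiv (k : ℕ) (hk : 1 ≤ k) : (ℕ × Σ j : Fin k, Parts j) ≃ Parts k :=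
  Equiv.ofBijective (fun p => ⟨addCols k p, addCols_mem k p⟩)
    ⟨fun _ _ h => addCols_injective k (congrArg Subtype.val h),
      fun s => (addCols_surjective k hk s.1 s.2.1 s.2.2).imp fun _ h => Subtype.ext h⟩

lemma weight_addCols (z q : ℝ) (k c : ℕ) (p : Σ j : Fin k, Parts j) :
    weight z q (addCols k (c, p)) = (z ^ k / q ^ (k ^ 2)) ^ c *
      (z ^ k / (q ^ ((p.1 : ℕ) ^ 2 + 2 * p.1 * (k - p.1)) * glOrder q (k - p.1)) *
        weight z q p.2.1) := by
  induction c with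
  | zero =>
    have := p.1.2
    simp only [addCols, Function.iterate_zero, id, pow_zero, one_mul]
    rw [weight_addCol _ _ _ _ p.2.2.1, p.2.2.2, show (p.1 : ℕ) + (k - p.1) = k by omega]
  | succ c ih =>
    rw [addCols_succ, weight_addCol _ _ _ _ (addCols_mem k _).1, ih, (addCols_mem k _).2]
    simp [glOrder]
    ring

/-! ### Summation -/

lemma hasSum_sigma_fin {k : ℕ} {β : Fin k → Type} (f : (Σ j, β j) → ℝ) (g : Fin k → ℝ)
    (h : ∀ j, HasSum (fun b => f ⟨j, b⟩) (g j)) : HasSum f (∑ j, g j) := by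
  have hs : Summable f := by
    refine Summable.of_abs ?_
    refine (summable_sigma_of_nonneg fun _ => abs_nonneg _).2 ⟨fun j => (h j).summable.abs, ?_⟩
    exact (hasSum_fintype _).summable
  exact HasSum.sigma_of_hasSum (hasSum_fintype g) h hs

open Finset in
lemma hasSum_weight {z q : ℝ} (hz : |z| < 1) (hq : 1 < q) (k : ℕ) :
    HasSum (fun s : Parts k => weight z q s.1) (closedForm z q k) := by
  induction k using Nat.strong_induction_on with
  | _ k ih =>
    rcases Nat.eq_zero_or_pos k with rfl | hk
    · have : Unique (Parts 0) :=
        ⟨⟨⟨0, by simp⟩⟩, fun s => Subtype.ext (Multiset.card_eq_zero.1 s.2.2)⟩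
      have hd : (default : Parts 0).1 = 0 := Multiset.card_eq_zero.1 (default : Parts 0).2.2
      convert hasSum_unique (fun s : Parts 0 => weight z q s.1) using 1
      rw [hd]
      simp [weight, closedForm, glOrder, expo]
    · have hy : |z ^ k / q ^ (k ^ 2)| < 1 := by
        have h1 : 1 ≤ q ^ (k ^ 2) := one_le_pow₀ hq.le
        have h2 : |z| ^ k < 1 := pow_lt_one₀ (abs_nonneg z) hz (by omega)
        rw [abs_div, abs_pow, abs_of_pos (by positivity : 0 < q ^ (k ^ 2)),
          div_lt_one (by positivity)]
        linarith
      let w : Fin k → ℝ := fun j =>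
        z ^ k / (q ^ ((j : ℕ) ^ 2 + 2 * j * (k - j)) * glOrder q (k - j))
      have hrest : HasSum (fun p : Σ j : Fin k, Parts j => w p.1 * weight z q p.2.1)
          (∑ j : Fin k, w j * closedForm z q j) :=
        hasSum_sigma_fin (fun p : Σ j : Fin k, Parts j => w p.1 * weight z q p.2.1)
          (fun j => w j * closedForm z q j) (fun j => HasSum.mul_left (w j) (ih j j.2))
      have hgeom : HasSum (fun n : ℕ => (z ^ k / q ^ (k ^ 2)) ^ n) _ :=
        hasSum_geometric_of_abs_lt_one hy
      have hsumm := summable_mul_of_summable_norm hgeom.summable.norm hrest.summable.norm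
      have hprod := hgeom.mul hrest hsumm
      have hval : closedForm z q k =
          (1 - z ^ k / q ^ (k ^ 2))⁻¹ * ∑ j : Fin k, w j * closedForm z q j := by
        have hrec := closedForm_rec hz hq k
        rw [Nat.sum_antidiagonal_eq_sum_range_succ_mk, sum_range_succ, sum_range] at hrec
        have h1 : 1 - z ^ k / q ^ (k ^ 2) ≠ 0 := by
          have := (abs_lt.1 hy).2
          linarith
        rw [eq_inv_mul_iff_mul_eq₀ h1, sub_mul, one_mul]
        nth_rewrite 1 [← hrec]
        simp [w, glOrder]
      rw [← (addColsEquiv k hk).hasSum_iff, hval]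
      refine Eq.mp (congrArg (HasSum · _ _) (funext fun p => ?_)) hprod
      exact (weight_addCols z q k p.1 p.2).symm

/-- Partitions with `k` parts, as pairs of a size and a `Nat.Partition`, correspond to their
multisets of parts. -/
def partsEquiv (k : ℕ) :
    {lam : Σ n : ℕ, Nat.Partition n // Multiset.card lam.2.parts = k} ≃ Parts k where
  toFun lam := ⟨lam.1.2.parts, fun h => absurd (lam.1.2.parts_pos h) (lt_irrefl 0), lam.2⟩
  invFun s := ⟨⟨s.1.sum, ⟨s.1, fun hi => Nat.pos_of_ne_zero fun h => s.2.1 (h ▸ hi), rfl⟩⟩,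
    s.2.2⟩
  left_inv := by
    rintro ⟨⟨n, s, h, rfl⟩, hc⟩
    rfl
  right_inv _ := rfl

theorem statement1 (u q x : ℝ) (hq : 1 < q) (hu0 : 0 < u) (hu1 : u < 1) (hx : |x| ≤ 1)
    (k : ℕ) (hk : 1 ≤ k) :
    HasSum (fun lam : {lam : Σ n : ℕ, Nat.Partition n // Multiset.card lam.2.parts = k} =>
        x ^ lam.1.1 * measureM u q lam.1)
      ((u * x) ^ k / glOrder q k *
        ((∏' r : ℕ, (1 - u / q ^ (r + 1))) /
          ∏ r ∈ Finset.range k, (1 - u * x / q ^ (r + 1)))) := by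
  have hz : |u * x| < 1 := by
    rw [abs_mul, abs_of_pos hu0]
    nlinarith [abs_nonneg x]
  have h := ((partsEquiv k).hasSum_iff.2 (hasSum_weight hz hq k)).mul_left
    (∏' r : ℕ, (1 - u / q ^ (r + 1)))
  have hval : (u * x) ^ k / glOrder q k *
      ((∏' r : ℕ, (1 - u / q ^ (r + 1))) / ∏ r ∈ Finset.range k, (1 - u * x / q ^ (r + 1))) =
      (∏' r : ℕ, (1 - u / q ^ (r + 1))) * closedForm (u * x) q k := by
    unfold closedForm
    rw [div_mul_div_comm, mul_div_assoc', mul_comm ((u * x) ^ k)]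
  rw [hval]
  refine Eq.mp (congrArg (HasSum · _ _) (funext fun lam => ?_)) h
  symm
  obtain ⟨⟨n, s, hs, rfl⟩, hc⟩ := lam
  simp only [measureM, weight, expo, partsEquiv, Function.comp, Equiv.coe_fn_mk]
  rw [mul_pow]
  ring
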